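/- arXiv:1810.11648 — 2 statements merged into one kernel-verified Lean document; each statement's English description precedes it below -/
import Mathlib

section
/- Let 0 ≤ ε < 1/2, let P be a no-signaling (2,2,2) box, and let ν be a probability distribution on {0,1}² with (1/2−ε)² ≤ ν(x,y) ≤ (1/2+ε)² for all (x,y). Define B̄^SV_ε = (1/2−ε)²·ν(0,0)·P(0,0|0,0) − (1/2+ε)²·(ν(0,1)·P(0,1|0,1) + ν(1,0)·P(1,0|1,0) + ν(1,1)·P(0,0|1,1)). Then for every quadruple (a,b,x,y) with a ⊕ b = x·y one has B̄^SV_ε/((1/4−ε²)²) ≤ P(a,b|x,y) ≤ 1 − B̄^SV_ε/((1/4−ε²)²), and for every quadruple with a ⊕ b ≠ x·y one has P(a,b|x,y) ≤ 1 − B̄^SV_ε/((1/4−ε²)²). -/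
/-!
Write `a b | x y` for the entry `P(a, b | x, y)`. The eight entries with `a ⊕ b = x·y` form a cycle
in which neighbours share one party's setting and outcome,
`00|00 – 00|01 – 10|11 – 11|10 – 11|00 – 11|01 – 01|11 – 00|10 – 00|00`.
An entry is at most the marginal shared with its neighbour, that is, at most the neighbour plus one
entry with `a ⊕ b ≠ x·y`. Walking from `00|00` in either direction, the first three steps cost
exactly the three entries subtracted in Hardy's expression
`H = P(0,0|0,0) - P(0,1|0,1) - P(1,0|1,0) - P(0,0|1,1)`, and an identity between marginals deals
with the antipode `11|00`. So `H` is a lower bound for the whole cycle. The bounds on `ν` give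
`B̄ ≤ (1/4 - ε²)² H`, and each entry is accompanied in its row by a different entry of the cycle,
which yields the upper bounds.
-/

/-- The no-signaling condition for a family `P a b x y`, the probability of outcomes `a`, `b` given
settings `x`, `y`: each party's marginal is independent of the other party's setting. Nonnegativity
and normalization are kept apart, since they enter separately. -/
structure IsNoSignaling {A B X Y R : Type*} [Fintype A] [Fintype B] [AddCommMonoid R]
    (P : A → B → X → Y → R) : Prop where
  sum_right_eq : ∀ a x y y', ∑ b, P a b x y = ∑ b, P a b x y'
  sum_left_eq : ∀ b y x x', ∑ a, P a b x y = ∑ a, P a b x' y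

/-- Hardy's expression for a (2,2,2) box, whose positivity witnesses nonlocality. -/
def hardyValue {R : Type*} [AddGroup R] (P : Fin 2 → Fin 2 → Fin 2 → Fin 2 → R) : R :=
  P 0 0 0 0 - P 0 1 0 1 - P 1 0 1 0 - P 0 0 1 1

/-- The value of the measurement-dependent-locality expression on a (2,2,2) box `P` with input
weights `ν` known to lie between `l` and `u`. The quantity `B̄^SV_ε` is the case
`l = (1/2 - ε)²`, `u = (1/2 + ε)²`. -/
def mdlValue {R : Type*} [Ring R] (l u : R) (ν : Fin 2 → Fin 2 → R)
    (P : Fin 2 → Fin 2 → Fin 2 → Fin 2 → R) : R :=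
  l * ν 0 0 * P 0 0 0 0 - u * (ν 0 1 * P 0 1 0 1 + ν 1 0 * P 1 0 1 0 + ν 1 1 * P 0 0 1 1)

namespace IsNoSignaling

section Marginals

variable {A B X Y R : Type*} [Fintype A] [Fintype B] [AddCommMonoid R] {P : A → B → X → Y → R}

theorem swap (hP : IsNoSignaling P) : IsNoSignaling fun b a y x => P a b x y :=
  ⟨hP.sum_left_eq, hP.sum_right_eq⟩

variable [PartialOrder R] [IsOrderedAddMonoid R]

theorem apply_le_sum_right (hP : IsNoSignaling P) (hpos : ∀ a b x y, 0 ≤ P a b x y)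
    (a : A) (b : B) (x : X) (y y' : Y) : P a b x y ≤ ∑ b', P a b' x y' :=
  (Finset.single_le_sum (f := fun b' => P a b' x y) (fun b' _ => hpos a b' x y)
    (Finset.mem_univ b)).trans_eq (hP.sum_right_eq a x y y')

theorem apply_le_sum_left (hP : IsNoSignaling P) (hpos : ∀ a b x y, 0 ≤ P a b x y)
    (a : A) (b : B) (x x' : X) (y : Y) : P a b x y ≤ ∑ a', P a' b x' y :=
  hP.swap.apply_le_sum_right (fun b a y x => hpos a b x y) b a y x x'

end Marginals

section Hardy

variable {R : Type*} [CommRing R] {P : Fin 2 → Fin 2 → Fin 2 → Fin 2 → R}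

theorem hardyValue_eq_antipode (hP : IsNoSignaling P) :
    hardyValue P = P 1 1 0 0 - P 0 1 1 0 - P 1 0 0 1 - P 1 1 1 1 := by
  have alice₀ := hP.sum_right_eq 0 0 0 1
  have alice₁ := hP.sum_right_eq 1 1 0 1
  have bob₀ := hP.sum_left_eq 1 0 0 1
  have bob₁ := hP.sum_left_eq 0 1 0 1
  simp only [Fin.sum_univ_two] at alice₀ alice₁ bob₀ bob₁
  unfold hardyValue
  linear_combination alice₀ - alice₁ - bob₀ + bob₁

variable [LinearOrder R] [IsStrictOrderedRing R]

theorem hardyValue_le_half_cycle (hP : IsNoSignaling P) (hpos : ∀ a b x y, 0 ≤ P a b x y) :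
    hardyValue P ≤ P 0 0 0 1 ∧ hardyValue P ≤ P 1 0 1 1 ∧ hardyValue P ≤ P 1 1 1 0 := by
  have step₁ : P 0 0 0 0 ≤ P 0 0 0 1 + P 0 1 0 1 := by
    simpa only [Fin.sum_univ_two] using hP.apply_le_sum_right hpos 0 0 0 0 1
  have step₂ : P 0 0 0 1 ≤ P 0 0 1 1 + P 1 0 1 1 := by
    simpa only [Fin.sum_univ_two] using hP.apply_le_sum_left hpos 0 0 0 1 1
  have step₃ : P 1 0 1 1 ≤ P 1 0 1 0 + P 1 1 1 0 := by
    simpa only [Fin.sum_univ_two] using hP.apply_le_sum_right hpos 1 0 1 1 0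
  unfold hardyValue
  refine ⟨?_, ?_, ?_⟩ <;> linarith [hpos 1 0 1 0, hpos 0 0 1 1]

theorem hardyValue_le_apply (hP : IsNoSignaling P) (hpos : ∀ a b x y, 0 ≤ P a b x y)
    {a b x y : Fin 2} (hwin : a + b = x * y) : hardyValue P ≤ P a b x y := by
  have start : hardyValue P ≤ P 0 0 0 0 := by
    unfold hardyValue
    linarith [hpos 0 1 0 1, hpos 1 0 1 0, hpos 0 0 1 1]
  have antipode : hardyValue P ≤ P 1 1 0 0 := by
    linarith [hP.hardyValue_eq_antipode, hpos 0 1 1 0, hpos 1 0 0 1, hpos 1 1 1 1]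
  obtain ⟨h₀₀₀₁, h₁₀₁₁, h₁₁₁₀⟩ := hP.hardyValue_le_half_cycle hpos
  have hswap : hardyValue (fun b a y x => P a b x y) = hardyValue P := by
    unfold hardyValue
    ring
  obtain ⟨h₀₀₁₀, h₀₁₁₁, h₁₁₀₁⟩ := hP.swap.hardyValue_le_half_cycle fun b a y x => hpos a b x y
  rw [hswap] at h₀₀₁₀ h₀₁₁₁ h₁₁₀₁
  fin_cases a <;> fin_cases b <;> fin_cases x <;> fin_cases y <;>
    first
    | assumption
    | exact absurd hwin (by decide)

end Hardy

end IsNoSignaling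

theorem add_le_one_of_fst_ne {A B R : Type*} [Fintype A] [Fintype B] [Semiring R] [PartialOrder R]
    [IsOrderedAddMonoid R] {p : A → B → R} (hpos : ∀ a b, 0 ≤ p a b)
    (hsum : ∑ a, ∑ b, p a b = 1) {a a' : A} (hne : a ≠ a') (b b' : B) :
    p a b + p a' b' ≤ 1 :=
  calc p a b + p a' b' ≤ ∑ b, p a b + ∑ b, p a' b :=
        add_le_add (Finset.single_le_sum (fun b _ => hpos a b) (Finset.mem_univ b))
          (Finset.single_le_sum (fun b _ => hpos a' b) (Finset.mem_univ b'))
    _ ≤ ∑ a, ∑ b, p a b :=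
        Finset.add_le_sum (fun a _ => Finset.sum_nonneg fun b _ => hpos a b)
          (Finset.mem_univ a) (Finset.mem_univ a') hne
    _ = 1 := hsum

theorem apply_le_one_sub_of_le_winning {R : Type*} [Ring R] [PartialOrder R]
    [IsOrderedAddMonoid R] {p : Fin 2 → Fin 2 → R} (hpos : ∀ a b, 0 ≤ p a b)
    (hsum : ∑ a, ∑ b, p a b = 1) {s : Fin 2} {c : R} (hwin : ∀ a b, a + b = s → c ≤ p a b)
    (a b : Fin 2) : p a b ≤ 1 - c := by
  have hother : c ≤ p (a + 1) (a + 1 + s) := hwin _ _ (by lia)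
  have hrow : p a b + p (a + 1) (a + 1 + s) ≤ 1 := add_le_one_of_fst_ne hpos hsum (by lia) _ _
  exact le_sub_iff_add_le.2 ((add_le_add_right hother _).trans hrow)

theorem mdlValue_le_mul_hardyValue {R : Type*} [CommRing R] [LinearOrder R]
    [IsStrictOrderedRing R] {l u : R} (hl : 0 ≤ l) (hu : 0 ≤ u) {ν : Fin 2 → Fin 2 → R}
    (h₀₀ : ν 0 0 ≤ u) (h₀₁ : l ≤ ν 0 1) (h₁₀ : l ≤ ν 1 0) (h₁₁ : l ≤ ν 1 1)
    {P : Fin 2 → Fin 2 → Fin 2 → Fin 2 → R} (hpos : ∀ a b x y, 0 ≤ P a b x y) :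
    mdlValue l u ν P ≤ l * u * hardyValue P :=
  calc mdlValue l u ν P
      ≤ l * u * P 0 0 0 0 - u * (l * P 0 1 0 1 + l * P 1 0 1 0 + l * P 0 0 1 1) := by
        unfold mdlValue
        gcongr <;> apply hpos
    _ = l * u * hardyValue P := by
        unfold hardyValue
        ring

theorem noSignaling_mdl_entry_bounds_general {𝕜 : Type*} [Field 𝕜] [LinearOrder 𝕜]
    [IsStrictOrderedRing 𝕜] {l u : 𝕜} (hl : 0 < l) (hu : 0 < u)
    {P : Fin 2 → Fin 2 → Fin 2 → Fin 2 → 𝕜} (hP : IsNoSignaling P)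
    (hpos : ∀ a b x y, 0 ≤ P a b x y) (hnorm : ∀ x y, ∑ a, ∑ b, P a b x y = 1)
    {ν : Fin 2 → Fin 2 → 𝕜}
    (h₀₀ : ν 0 0 ≤ u) (h₀₁ : l ≤ ν 0 1) (h₁₀ : l ≤ ν 1 0) (h₁₁ : l ≤ ν 1 1) :
    (∀ a b x y : Fin 2, a + b = x * y → mdlValue l u ν P / (l * u) ≤ P a b x y) ∧
      ∀ a b x y : Fin 2, P a b x y ≤ 1 - mdlValue l u ν P / (l * u) := by
  have hmdl : mdlValue l u ν P / (l * u) ≤ hardyValue P :=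
    (div_le_iff₀' (mul_pos hl hu)).2
      (mdlValue_le_mul_hardyValue hl.le hu.le h₀₀ h₀₁ h₁₀ h₁₁ hpos)
  have hlower : ∀ a b x y : Fin 2, a + b = x * y → mdlValue l u ν P / (l * u) ≤ P a b x y :=
    fun _ _ _ _ hwin => hmdl.trans (hP.hardyValue_le_apply hpos hwin)
  exact ⟨hlower, fun a b x y => apply_le_one_sub_of_le_winning (fun a b => hpos a b x y)
    (hnorm x y) (fun a b => hlower a b x y) a b⟩

/-- For a no-signaling (2,2,2) box with inputs chosen from an ε-SV source, every
entry with `a ⊕ b = x·y` is bounded between `B̄^SV_ε/((1/4−ε²)²)` and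
`1 − B̄^SV_ε/((1/4−ε²)²)`, and every other entry is bounded above by
`1 − B̄^SV_ε/((1/4−ε²)²)`. -/
theorem noSignaling_mdl_entry_bounds (ε : ℝ) (hε0 : 0 ≤ ε) (hε1 : ε < 1 / 2)
    (P : Fin 2 → Fin 2 → Fin 2 → Fin 2 → ℝ)
    (hpos : ∀ a b x y, 0 ≤ P a b x y)
    (hnorm : ∀ x y, ∑ a, ∑ b, P a b x y = 1)
    (hnsA : ∀ a x y y', ∑ b, P a b x y = ∑ b, P a b x y')
    (hnsB : ∀ b y x x', ∑ a, P a b x y = ∑ a, P a b x' y)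
    (ν : Fin 2 → Fin 2 → ℝ)
    (hνsum : ∑ x, ∑ y, ν x y = 1)
    (hνlow : ∀ x y, (1 / 2 - ε) ^ 2 ≤ ν x y)
    (hνhigh : ∀ x y, ν x y ≤ (1 / 2 + ε) ^ 2) :
    (∀ a b x y : Fin 2, a + b = x * y →
      ((1 / 2 - ε) ^ 2 * ν 0 0 * P 0 0 0 0 -
            (1 / 2 + ε) ^ 2 *
              (ν 0 1 * P 0 1 0 1 + ν 1 0 * P 1 0 1 0 + ν 1 1 * P 0 0 1 1)) /
          ((1 / 4 - ε ^ 2) ^ 2) ≤ P a b x y ∧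
        P a b x y ≤
          1 - ((1 / 2 - ε) ^ 2 * ν 0 0 * P 0 0 0 0 -
                (1 / 2 + ε) ^ 2 *
                  (ν 0 1 * P 0 1 0 1 + ν 1 0 * P 1 0 1 0 + ν 1 1 * P 0 0 1 1)) /
              ((1 / 4 - ε ^ 2) ^ 2)) ∧
    (∀ a b x y : Fin 2, a + b ≠ x * y →
      P a b x y ≤
        1 - ((1 / 2 - ε) ^ 2 * ν 0 0 * P 0 0 0 0 -
              (1 / 2 + ε) ^ 2 *
                (ν 0 1 * P 0 1 0 1 + ν 1 0 * P 1 0 1 0 + ν 1 1 * P 0 0 1 1)) /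
            ((1 / 4 - ε ^ 2) ^ 2)) := by
  have hmul : (1 / 4 - ε ^ 2) ^ 2 = (1 / 2 - ε) ^ 2 * (1 / 2 + ε) ^ 2 := by ring
  obtain ⟨hlower, hupper⟩ := noSignaling_mdl_entry_bounds_general
    (pow_pos (sub_pos.2 hε1) 2) (pow_pos (by linarith : 0 < 1 / 2 + ε) 2) ⟨hnsA, hnsB⟩ hpos hnorm
    (hνhigh 0 0) (hνlow 0 1) (hνlow 1 0) (hνlow 1 1)
  rw [hmul]
  exact ⟨fun a b x y hwin => ⟨hlower a b x y hwin, hupper a b x y⟩, fun a b x y _ => hupper a b x y⟩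
end

section
/- Consider a two-party Bell scenario with one party having input set of size 2 and the other party having input set of size n ≥ 2, with arbitrary finite output sets. Let (a_H, b_H, x_H, y_H) be a distinguished quadruple and let S_0 be a Hardy frame for it, i.e. a set of quadruples such that every local box vanishing on S_0 satisfies P(a_H,b_H|x_H,y_H) = 0. For a no-signaling box P define p_H = P(a_H,b_H|x_H,y_H), z_H = Σ_{(a,b,x,y)∈S_0} P(a,b|x,y), and B_H = p_H − z_H. Then B_H ≤ p_H ≤ 1 − B_H/(n−1) and z_H ≤ 1 − n·B_H/(n−1). -/
/-- A two-party box: nonnegative entries, normalized for every input pair. -/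
def IsBox {A B X Y : Type*} [Fintype A] [Fintype B]
    (P : A → B → X → Y → ℝ) : Prop :=
  (∀ a b x y, 0 ≤ P a b x y) ∧ ∀ x y, (∑ a, ∑ b, P a b x y) = 1

/-- The no-signaling conditions: each party's marginal is independent of the
other party's input. -/
def NoSignaling {A B X Y : Type*} [Fintype A] [Fintype B]
    (P : A → B → X → Y → ℝ) : Prop :=
  (∀ a x y y', (∑ b, P a b x y) = ∑ b, P a b x y') ∧
  (∀ b y x x', (∑ a, P a b x y) = ∑ a, P a b x' y)

/-- A box is local (classical) if it is a finite convex combination of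
deterministic boxes. -/
def IsLocal {A B X Y : Type*} [Fintype A] [Fintype B] [DecidableEq A] [DecidableEq B]
    (P : A → B → X → Y → ℝ) : Prop :=
  ∃ (Λ : Type) (s : Finset Λ) (q : Λ → ℝ) (f : Λ → X → A) (g : Λ → Y → B),
    (∀ l ∈ s, 0 ≤ q l) ∧ (∑ l ∈ s, q l = 1) ∧
    ∀ a b x y, P a b x y =
      ∑ l ∈ s, q l * (if a = f l x then 1 else 0) * (if b = g l y then 1 else 0)

/-- A box vanishes on a set of (output, output, input, input) quadruples. -/
def VanishesOn {A B X Y : Type*} (P : A → B → X → Y → ℝ)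
    (S0 : Finset (A × B × X × Y)) : Prop :=
  ∀ t ∈ S0, P t.1 t.2.1 t.2.2.1 t.2.2.2 = 0

/-!
The boxes at inputs `(x, y)` and `(x', y)` have the same marginal for the second party, so two
events whose projections to the second output are disjoint have total probability at most `1`.
Let `x'` be the input of the two-input party other than `xH`. Since deterministic strategies cannot
avoid a Hardy frame `S₀`, each output `a` at `x'` comes with an input `y = c a` at which every
answer `b` (with `b = bH` if `y = yH`) puts `(aH, b, xH, y)` or `(a, b, x', y)` into `S₀`. Hence for
each `y` the probability of `c a = y` is at most `1 - p_H` plus the part of `z_H` lying over `y`. As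
these events partition the outputs at `x'`, summing over the `n` inputs `y` gives
`1 ≤ n (1 - p_H) + z_H`. All the bounds are rearrangements of this inequality and `0 ≤ z_H`.
-/

open Finset

section Marginals

variable {A A' B M : Type*} [Fintype A] [Fintype A'] [DecidableEq B]
  [AddCommMonoid M] [PartialOrder M] [IsOrderedAddMonoid M]

theorem sum_le_sum_marginal_image_snd {p : A × B → M} (hp : 0 ≤ p) (E : Finset (A × B)) :
    ∑ t ∈ E, p t ≤ ∑ b ∈ E.image Prod.snd, ∑ a, p (a, b) := by
  rw [← sum_product_right']
  refine sum_le_sum_of_subset_of_nonneg (fun t ht => ?_) fun t _ _ => hp t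
  exact mem_product.2 ⟨mem_univ _, mem_image_of_mem _ ht⟩

theorem sum_add_sum_le_of_disjoint_image_snd [Fintype B] {p : A × B → M}
    {q : A' × B → M} (hp : 0 ≤ p) (hq : 0 ≤ q) (hmarginal : ∀ b, ∑ a, p (a, b) = ∑ a, q (a, b))
    {E : Finset (A × B)} {F : Finset (A' × B)}
    (hEF : Disjoint (E.image Prod.snd) (F.image Prod.snd)) :
    ∑ t ∈ E, p t + ∑ t ∈ F, q t ≤ ∑ t, p t := by
  calc ∑ t ∈ E, p t + ∑ t ∈ F, q t
      ≤ ∑ b ∈ E.image Prod.snd, ∑ a, p (a, b) + ∑ b ∈ F.image Prod.snd, ∑ a, p (a, b) := by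
        simp only [hmarginal]
        refine add_le_add ?_ (sum_le_sum_marginal_image_snd hq F)
        simpa only [hmarginal] using sum_le_sum_marginal_image_snd hp E
    _ = ∑ b ∈ E.image Prod.snd ∪ F.image Prod.snd, ∑ a, p (a, b) := (sum_union hEF).symm
    _ ≤ ∑ b, ∑ a, p (a, b) :=
        sum_le_univ_sum_of_nonneg fun b => sum_nonneg fun a _ => hp (a, b)
    _ = ∑ t, p t := (Fintype.sum_prod_type_right p).symm

end Marginals

/-- The probability that the pair of outputs lies in the event `E`, given the inputs `x` and `y`. -/
def outputProb {A B X Y : Type*} (P : A → B → X → Y → ℝ) (x : X) (y : Y)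
    (E : Finset (A × B)) : ℝ :=
  ∑ t ∈ E, P t.1 t.2 x y

theorem outputProb_product_univ {A B X Y : Type*} [Fintype B] (P : A → B → X → Y → ℝ) (x : X)
    (y : Y) (C : Finset A) :
    outputProb P x y (C ×ˢ univ) = ∑ a ∈ C, ∑ b, P a b x y :=
  sum_product ..

section OutputProb

variable {A B X Y : Type*} [Fintype A] [Fintype B] {P : A → B → X → Y → ℝ}

theorem outputProb_mono (hP : IsBox P) (x : X) (y : Y) {E F : Finset (A × B)} (hEF : E ⊆ F) :
    outputProb P x y E ≤ outputProb P x y F :=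
  sum_le_sum_of_subset_of_nonneg hEF fun t _ _ => hP.1 t.1 t.2 x y

theorem outputProb_le_outputProb_sdiff_add [DecidableEq A] [DecidableEq B] (hP : IsBox P)
    (x : X) (y : Y) (E T : Finset (A × B)) :
    outputProb P x y E ≤ outputProb P x y (E \ T) + outputProb P x y T :=
  calc outputProb P x y E ≤ outputProb P x y (E \ T ∪ T) :=
        outputProb_mono hP x y (by rw [sdiff_union_self_eq_union]; exact subset_union_left)
    _ = outputProb P x y (E \ T) + outputProb P x y T := sum_union sdiff_disjoint

-- A union bound: `hcover` says that, when the boxes at `(x, y)` and `(x', y)` are glued along their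
-- common second output, `E` and `E'` occur together only if `T` or `T'` does.
theorem outputProb_add_outputProb_le (hP : IsBox P) (hns : NoSignaling P)
    {x x' : X} {y : Y} {E E' T T' : Finset (A × B)}
    (hcover : ∀ a a' b, (a, b) ∈ E → (a', b) ∈ E' → (a, b) ∈ T ∨ (a', b) ∈ T') :
    outputProb P x y E + outputProb P x' y E' ≤
      1 + outputProb P x y T + outputProb P x' y T' := by
  classical
  have hdisj : Disjoint ((E \ T).image Prod.snd) ((E' \ T').image Prod.snd) := by
    simp only [disjoint_left, mem_image, mem_sdiff, Prod.exists]
    rintro _ ⟨a, b, ⟨hE, hT⟩, rfl⟩ ⟨a', _, ⟨hE', hT'⟩, rfl⟩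
    exact (hcover a a' _ hE hE').elim hT hT'
  have hsdiff : outputProb P x y (E \ T) + outputProb P x' y (E' \ T') ≤ 1 := by
    rw [← hP.2 x y, ← Fintype.sum_prod_type']
    exact sum_add_sum_le_of_disjoint_image_snd (fun t => hP.1 t.1 t.2 x y)
      (fun t => hP.1 t.1 t.2 x' y) (fun b => hns.2 b y x x') hdisj
  linarith [outputProb_le_outputProb_sdiff_add hP x y E T,
    outputProb_le_outputProb_sdiff_add hP x' y E' T']

theorem sum_outputProb_fiber_product_univ [Fintype Y] [DecidableEq Y] (hP : IsBox P)
    (hns : NoSignaling P) (c : A → Y) (x : X) (y₀ : Y) :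
    ∑ y, outputProb P x y (({a | c a = y} : Finset A) ×ˢ univ) = 1 :=
  calc ∑ y, outputProb P x y (({a | c a = y} : Finset A) ×ˢ univ)
      = ∑ y, ∑ a with c a = y, ∑ b, P a b x y₀ :=
        sum_congr rfl fun y _ => (outputProb_product_univ P x y _).trans
          (sum_congr rfl fun a _ => hns.1 a x y y₀)
    _ = ∑ a, ∑ b, P a b x y₀ := sum_fiberwise ..
    _ = 1 := hP.2 x y₀

theorem le_outputProb_singleton_product [DecidableEq B] [DecidableEq Y] (hP : IsBox P)
    (hns : NoSignaling P) (a : A) (b₀ : B) (x : X) (y₀ y : Y) :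
    P a b₀ x y₀ ≤ outputProb P x y ({a} ×ˢ ({b | y = y₀ → b = b₀} : Finset B)) := by
  rw [outputProb, sum_product, sum_singleton]
  rcases eq_or_ne y y₀ with rfl | hy
  · simp [sum_filter]
  · simp only [hy, false_imp_iff, filter_true]
    rw [hns.1 a x y y₀]
    exact single_le_sum (f := fun b => P a b x y₀) (fun b _ => hP.1 a b x y₀) (mem_univ b₀)

end OutputProb

/-- The outputs that the set of quadruples `S` contains at the inputs `x` and `y`. -/
def outputsAt {A B X Y : Type*} [Fintype A] [Fintype B] [DecidableEq A] [DecidableEq B]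
    [DecidableEq X] [DecidableEq Y] (S : Finset (A × B × X × Y)) (x : X) (y : Y) :
    Finset (A × B) :=
  {t | (t.1, t.2, x, y) ∈ S}

theorem sum_outputProb_outputsAt {A B X Y : Type*} [Fintype A] [Fintype B] [Fintype X] [Fintype Y]
    [DecidableEq A] [DecidableEq B] [DecidableEq X] [DecidableEq Y]
    (P : A → B → X → Y → ℝ) (S : Finset (A × B × X × Y)) :
    ∑ x, ∑ y, outputProb P x y (outputsAt S x y) = ∑ t ∈ S, P t.1 t.2.1 t.2.2.1 t.2.2.2 := by
  rw [← Fintype.sum_prod_type', ← sum_fiberwise S fun t => t.2.2]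
  refine sum_congr rfl fun xy _ => ?_
  refine sum_nbij' (fun t => (t.1, t.2, xy)) (fun t => (t.1, t.2.1)) (by simp [outputsAt])
    (fun t ht => ?_) (by simp) (fun t ht => ?_) (by simp)
  · obtain ⟨htS, rfl⟩ := mem_filter.1 ht
    exact mem_filter.2 ⟨mem_univ _, htS⟩
  · rw [← (mem_filter.1 ht).2]

/-- The box in which the parties answer by the functions `f` and `g` of their own inputs. -/
def deterministicBox {A B X Y : Type*} [DecidableEq A] [DecidableEq B] (f : X → A) (g : Y → B)
    (a : A) (b : B) (x : X) (y : Y) : ℝ :=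
  (if a = f x then 1 else 0) * (if b = g y then 1 else 0)

section DeterministicBox

variable {A B X Y : Type*} [DecidableEq A] [DecidableEq B]

theorem isBox_deterministicBox [Fintype A] [Fintype B] (f : X → A) (g : Y → B) :
    IsBox (deterministicBox f g) :=
  ⟨fun a b x y => by unfold deterministicBox; positivity, fun x y => by simp [deterministicBox]⟩

theorem isLocal_deterministicBox [Fintype A] [Fintype B] (f : X → A) (g : Y → B) :
    IsLocal (deterministicBox f g) :=
  ⟨Unit, {()}, fun _ => 1, fun _ => f, fun _ => g, by simp, by simp, by simp [deterministicBox]⟩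

theorem vanishesOn_deterministicBox {f : X → A} {g : Y → B} {S : Finset (A × B × X × Y)}
    (hS : ∀ x y, (f x, g y, x, y) ∉ S) : VanishesOn (deterministicBox f g) S := by
  rintro ⟨a, b, x, y⟩ ht
  have hab : b = g y → a ≠ f x := by
    rintro rfl rfl
    exact hS x y ht
  simpa [deterministicBox, imp_iff_not_or] using hab

end DeterministicBox

/-- The combinatorial form of a Hardy frame for `(aH, bH, xH, yH)`: every pair of deterministic
strategies answering `(aH, bH)` to `(xH, yH)` produces some quadruple of `S`. -/
def IsHardyFrame {A B X Y : Type*} (S : Finset (A × B × X × Y))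
    (aH : A) (bH : B) (xH : X) (yH : Y) : Prop :=
  ∀ (f : X → A) (g : Y → B), f xH = aH → g yH = bH → ∃ x y, (f x, g y, x, y) ∈ S

section HardyFrame

variable {A B X Y : Type*} {S : Finset (A × B × X × Y)} {aH : A} {bH : B} {xH : X} {yH : Y}

theorem isHardyFrame_of_forall_isLocal [Fintype A] [Fintype B] [DecidableEq A] [DecidableEq B]
    (hS : ∀ Q : A → B → X → Y → ℝ, IsBox Q → IsLocal Q → VanishesOn Q S → Q aH bH xH yH = 0) :
    IsHardyFrame S aH bH xH yH := by
  intro f g hf hg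
  by_contra! havoid
  have hzero := hS _ (isBox_deterministicBox f g) (isLocal_deterministicBox f g)
    (vanishesOn_deterministicBox havoid)
  simp [deterministicBox, hf, hg] at hzero

-- Otherwise the second party could answer every input so as to avoid `S`, whether the first party
-- answers `aH` at `xH` or `a` at `x'`.
theorem IsHardyFrame.exists_input_forall_mem (hS : IsHardyFrame S aH bH xH yH) {x' : X}
    (hX : ∀ x, x ≠ xH → x = x') (a : A) :
    ∃ y, ∀ b, (y = yH → b = bH) → (aH, b, xH, y) ∈ S ∨ (a, b, x', y) ∈ S := by
  classical
  by_contra! havoid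
  choose g hgH hg hg' using havoid
  obtain ⟨x, y, hxy⟩ := hS (Function.update (fun _ => a) xH aH) g (by simp) (hgH yH rfl)
  rcases eq_or_ne x xH with rfl | hx
  · exact hg y (by simpa using hxy)
  · obtain rfl := hX x hx
    exact hg' y (by simpa [hx] using hxy)

theorem IsHardyFrame.one_add_card_mul_le [Fintype A] [Fintype B] [Fintype X] [Fintype Y]
    (hS : IsHardyFrame S aH bH xH yH) (hX : Fintype.card X = 2) {P : A → B → X → Y → ℝ}
    (hP : IsBox P) (hns : NoSignaling P) :
    1 + Fintype.card Y * P aH bH xH yH ≤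
      Fintype.card Y + ∑ t ∈ S, P t.1 t.2.1 t.2.2.1 t.2.2.2 := by
  classical
  obtain ⟨x', hx', hunique⟩ := (Nat.card_eq_two_iff' xH).1 (Nat.card_eq_fintype_card.trans hX)
  choose c hc using hS.exists_input_forall_mem hunique
  have hinput : ∀ y, outputProb P x' y (({a | c a = y} : Finset A) ×ˢ univ) + P aH bH xH yH ≤
      1 + (outputProb P xH y (outputsAt S xH y) + outputProb P x' y (outputsAt S x' y)) := by
    intro y
    have hglue := outputProb_add_outputProb_le hP hns (x := xH) (x' := x') (y := y)
      (E := {aH} ×ˢ ({b | y = yH → b = bH} : Finset B)) (E' := ({a | c a = y} : Finset A) ×ˢ univ)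
      (T := outputsAt S xH y) (T' := outputsAt S x' y) (by
        simp only [mem_product, mem_singleton, mem_filter, mem_univ, true_and, and_true, outputsAt]
        rintro _ a b ⟨rfl, hb⟩ rfl
        exact hc a b hb)
    linarith [le_outputProb_singleton_product hP hns aH bH xH yH y]
  have hsum := sum_le_sum fun y (_ : y ∈ univ) => hinput y
  have hpair : (univ : Finset X) = {xH, x'} := by
    ext x
    simpa [or_iff_not_imp_left] using hunique x
  rw [← sum_outputProb_outputsAt, hpair, sum_pair hx'.symm, ← sum_add_distrib]
  simpa [sum_add_distrib, sum_outputProb_fiber_product_univ hP hns c x' yH] using hsum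

end HardyFrame

section Swap

variable {A B X Y : Type*}

/-- Exchange of the two parties in a quadruple of outputs and inputs. -/
def swapParties : A × B × X × Y ≃ B × A × Y × X where
  toFun t := (t.2.1, t.1, t.2.2.2, t.2.2.1)
  invFun t := (t.2.1, t.1, t.2.2.2, t.2.2.1)
  left_inv _ := rfl
  right_inv _ := rfl

theorem IsBox.swap [Fintype A] [Fintype B] {P : A → B → X → Y → ℝ} (hP : IsBox P) :
    IsBox fun b a y x => P a b x y :=
  ⟨fun b a y x => hP.1 a b x y, fun y x => sum_comm.trans (hP.2 x y)⟩

theorem NoSignaling.swap [Fintype A] [Fintype B] {P : A → B → X → Y → ℝ} (hP : NoSignaling P) :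
    NoSignaling fun b a y x => P a b x y :=
  ⟨fun b y x x' => hP.2 b y x x', fun a x y y' => hP.1 a x y y'⟩

theorem IsHardyFrame.swap {S : Finset (A × B × X × Y)} {aH : A} {bH : B} {xH : X} {yH : Y}
    (hS : IsHardyFrame S aH bH xH yH) :
    IsHardyFrame (S.map swapParties.toEmbedding) bH aH yH xH := by
  intro g f hg hf
  obtain ⟨x, y, hxy⟩ := hS f g hf hg
  exact ⟨y, x, mem_map_of_mem swapParties.toEmbedding hxy⟩

end Swap

theorem IsHardyFrame.one_add_mul_le {A B X Y : Type*} [Fintype A] [Fintype B] [Fintype X]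
    [Fintype Y] {n : ℕ} (hcard : (Fintype.card X = 2 ∧ Fintype.card Y = n) ∨
      (Fintype.card X = n ∧ Fintype.card Y = 2))
    {S : Finset (A × B × X × Y)} {aH : A} {bH : B} {xH : X} {yH : Y}
    (hS : IsHardyFrame S aH bH xH yH) {P : A → B → X → Y → ℝ}
    (hP : IsBox P) (hns : NoSignaling P) :
    1 + n * P aH bH xH yH ≤ n + ∑ t ∈ S, P t.1 t.2.1 t.2.2.1 t.2.2.2 := by
  rcases hcard with ⟨hX, rfl⟩ | ⟨rfl, hY⟩
  · exact hS.one_add_card_mul_le hX hP hns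
  · simpa [swapParties] using hS.swap.one_add_card_mul_le hY hP.swap hns.swap

/-- For a Hardy frame in a scenario where one party has 2 inputs and the other
`n ≥ 2` inputs, every no-signaling box satisfies
`B_H ≤ p_H ≤ 1 − B_H/(n−1)` and `z_H ≤ 1 − n·B_H/(n−1)`. -/
theorem hardy_2xn_BH_bounds
    (A B X Y : Type) [Fintype A] [Fintype B] [Fintype X] [Fintype Y]
    [DecidableEq A] [DecidableEq B] (n : ℕ) (hn : 2 ≤ n)
    (hcard : (Fintype.card X = 2 ∧ Fintype.card Y = n) ∨
             (Fintype.card X = n ∧ Fintype.card Y = 2))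
    (aH : A) (bH : B) (xH : X) (yH : Y)
    (S0 : Finset (A × B × X × Y))
    (hframe : ∀ Q : A → B → X → Y → ℝ,
      IsBox Q → IsLocal Q → VanishesOn Q S0 → Q aH bH xH yH = 0)
    (P : A → B → X → Y → ℝ)
    (hbox : IsBox P) (hns : NoSignaling P) :
    (P aH bH xH yH - ∑ t ∈ S0, P t.1 t.2.1 t.2.2.1 t.2.2.2) ≤ P aH bH xH yH ∧
    P aH bH xH yH ≤
      1 - (P aH bH xH yH - ∑ t ∈ S0, P t.1 t.2.1 t.2.2.1 t.2.2.2) / ((n : ℝ) - 1) ∧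
    (∑ t ∈ S0, P t.1 t.2.1 t.2.2.1 t.2.2.2) ≤
      1 - (n : ℝ) * (P aH bH xH yH - ∑ t ∈ S0, P t.1 t.2.1 t.2.2.1 t.2.2.2) /
        ((n : ℝ) - 1) := by
  have hz : 0 ≤ ∑ t ∈ S0, P t.1 t.2.1 t.2.2.1 t.2.2.2 := sum_nonneg fun t _ => hbox.1 _ _ _ _
  have hhardy := (isHardyFrame_of_forall_isLocal hframe).one_add_mul_le hcard hbox hns
  have hn_pos : (0 : ℝ) < n - 1 := sub_pos.2 (Nat.one_lt_cast.2 hn)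
  refine ⟨sub_le_self _ hz, ?_, ?_⟩ <;>
  · rw [le_sub_comm, div_le_iff₀ hn_pos]
    linarith
end
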